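/- arXiv:2409.09879 — 2 statements merged into one kernel-verified Lean document; each statement's English description precedes it below -/
import Mathlib

section
/- Let n ≥ 1 and let f : [a,b] → ℝ be n times continuously differentiable. Suppose x_1, …, x_k ∈ [a,b] are distinct points and m_1, …, m_k ≥ 1 are integers with m_1 + ⋯ + m_k = n such that f^{(m)}(x_l) = 0 for all 0 ≤ m ≤ m_l − 1 and l = 1, …, k (i.e. f vanishes at x_l to order at least m_l). Then sup_{x∈[a,b]} |f(x)| ≤ ( (b−a)^n / n! ) · sup_{x∈[a,b]} |f^{(n)}(x)|. -/
/-!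
Fix `y ∈ [a,b]` different from every node and put `P = ∏ l, (X - x l) ^ m l`, a monic polynomial
of degree `n`. With `c = f y / P y`, the function `f - c P` vanishes at each `x l` to order `m l`
and also at `y`, so it has `n + 1` zeros counted with multiplicity. Rolle's theorem with
multiplicities (`exists_zero_of_sum_multiplicity`) gives a point `z` at which its `n`-th derivative
`f⁽ⁿ⁾ - c n!` vanishes. Hence `f y = P y * f⁽ⁿ⁾ z / n!`, and `|P y| ≤ (b - a) ^ n`.
-/

open Set

noncomputable section

open Polynomial in
/-- The nodal polynomial of Hermite interpolation, with roots `x l` of multiplicity `m l`. -/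
def hermiteNodal {k : ℕ} (x : Fin k → ℝ) (m : Fin k → ℕ) : ℝ[X] :=
  ∏ l, (X - C (x l)) ^ m l

open Polynomial in
lemma hermiteNodal_iterate_derivative_natDegree {k : ℕ} (x : Fin k → ℝ) (m : Fin k → ℕ) (t : ℝ) :
    (derivative^[∑ l, m l] (hermiteNodal x m)).eval t = (∑ l, m l).factorial := by
  have hmonic : ∀ l ∈ Finset.univ, ((X - C (x l)) ^ m l : ℝ[X]).Monic :=
    fun l _ => (monic_X_sub_C _).pow _
  have hdeg : (hermiteNodal x m).natDegree = ∑ l, m l := by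
    simp [hermiteNodal, natDegree_prod_of_monic _ _ hmonic]
  have hP : (hermiteNodal x m).Monic := monic_prod_of_monic _ _ hmonic
  have h0 : (derivative^[∑ l, m l] (hermiteNodal x m)).natDegree = 0 := by
    have := natDegree_iterate_derivative (hermiteNodal x m) (∑ l, m l)
    omega
  have hlead : (hermiteNodal x m).coeff (∑ l, m l) = 1 := by
    rw [← hdeg]; exact hP
  rw [eq_C_of_natDegree_eq_zero h0, eval_C, coeff_iterate_derivative, zero_add, hlead,
    Nat.descFactorial_self, nsmul_eq_mul, mul_one]

open Polynomial in
lemma hermiteNodal_iterate_derivative_node {k : ℕ} (x : Fin k → ℝ) (m : Fin k → ℕ)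
    (l : Fin k) (i : ℕ) (hi : i < m l) :
    (derivative^[i] (hermiteNodal x m)).eval (x l) = 0 := by
  have h1 : (X - C (x l)) ^ m l ∣ hermiteNodal x m :=
    Finset.dvd_prod_of_mem _ (Finset.mem_univ l)
  have h2 : (X - C (x l)) ∣ derivative^[i] (hermiteNodal x m) :=
    (dvd_pow_self _ (by omega)).trans (pow_sub_dvd_iterate_derivative_of_pow_dvd i h1)
  exact dvd_iff_isRoot.1 h2

lemma abs_eval_hermiteNodal_le {k : ℕ} {x : Fin k → ℝ} {a b y : ℝ} (m : Fin k → ℕ)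
    (hx : ∀ l, x l ∈ Icc a b) (hy : y ∈ Icc a b) :
    |(hermiteNodal x m).eval y| ≤ (b - a) ^ ∑ l, m l := by
  rw [hermiteNodal, Polynomial.eval_prod, Finset.abs_prod, ← Finset.prod_pow_eq_pow_sum]
  refine Finset.prod_le_prod (fun _ _ => abs_nonneg _) fun l _ => ?_
  simp only [Polynomial.eval_pow, Polynomial.eval_sub, Polynomial.eval_X, Polynomial.eval_C,
    abs_pow]
  gcongr
  obtain ⟨h1, h2⟩ := hx l
  obtain ⟨h3, h4⟩ := hy
  rw [abs_le]; constructor <;> linarith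

/-- Rolle's theorem with multiplicities. Here `G i` plays the role of the `i`-th derivative of
`G 0` on `[a,b]`; if `G 0` has more than `N` zeros counted with multiplicity, then `G N` has a zero.
In the inductive step a zero of order `μ` leaves a zero of order `μ - 1` of `G 1`, and each gap
between consecutive zeros contributes a new one, so exactly one zero is lost in total. -/
lemma exists_zero_of_sum_multiplicity {a b : ℝ} (N : ℕ) : ∀ (G : ℕ → ℝ → ℝ)
    (_ : ∀ i < N, ∀ t ∈ Icc a b, HasDerivWithinAt (G i) (G (i + 1) t) (Icc a b) t)
    (S : Finset ℝ) (_ : ∀ s ∈ S, s ∈ Icc a b) (μ : ℝ → ℕ)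
    (_ : ∀ s ∈ S, ∀ i < μ s, G i s = 0) (_ : N < ∑ s ∈ S, μ s),
    ∃ z ∈ Icc a b, G N z = 0 := by
  induction N with
  | zero =>
    intro G _ S hS μ hz hsum
    obtain ⟨s, hs, hμ⟩ := Finset.exists_ne_zero_of_sum_ne_zero hsum.ne'
    exact ⟨s, hS s hs, hz s hs 0 (by omega)⟩
  | succ N ih =>
    intro G hG S₀ hS₀ μ hz₀ hsum₀
    -- Points of multiplicity zero carry no information and must not be counted by Rolle.
    obtain ⟨S, hS, hz, hpos, hsum⟩ : ∃ S : Finset ℝ, (∀ s ∈ S, s ∈ Icc a b) ∧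
        (∀ s ∈ S, ∀ i < μ s, G i s = 0) ∧ (∀ s ∈ S, 0 < μ s) ∧ N + 1 < ∑ s ∈ S, μ s := by
      refine ⟨S₀.filter (μ · ≠ 0), fun s hs => hS₀ s (Finset.mem_filter.1 hs).1,
        fun s hs => hz₀ s (Finset.mem_filter.1 hs).1,
        fun s hs => Nat.pos_of_ne_zero (Finset.mem_filter.1 hs).2, ?_⟩
      rwa [Finset.sum_filter_ne_zero]
    have hrolle : ∀ u v : ℝ, ∃ w, u ∈ S → v ∈ S → u < v → w ∈ Ioo u v ∧ G 1 w = 0 := by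
      intro u v
      by_cases h : u ∈ S ∧ v ∈ S ∧ u < v
      · obtain ⟨hu, hv, huv⟩ := h
        have hsub : Icc u v ⊆ Icc a b := Icc_subset_Icc (hS u hu).1 (hS v hv).2
        obtain ⟨w, hw, hw0⟩ := exists_hasDerivAt_eq_zero (f := G 0) (f' := G 1) huv
          (fun t ht => ((hG 0 (by omega) t (hsub ht)).continuousWithinAt).mono hsub)
          (by rw [hz u hu 0 (hpos u hu), hz v hv 0 (hpos v hv)])
          (fun t ht => (hG 0 (by omega) t (hsub (Ioo_subset_Icc_self ht))).hasDerivAt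
            (Filter.mem_of_superset (Icc_mem_nhds ht.1 ht.2) hsub))
        exact ⟨w, fun _ _ _ => ⟨hw, hw0⟩⟩
      · exact ⟨0, fun h1 h2 h3 => absurd ⟨h1, h2, h3⟩ h⟩
    choose r hr using hrolle
    let T : Finset ℝ := ((S ×ˢ S).filter fun p => p.1 < p.2).image fun p => r p.1 p.2
    have hT : ∀ w ∈ T, w ∈ Icc a b ∧ G 1 w = 0 := by
      intro w hw
      simp only [T, Finset.mem_image, Finset.mem_filter, Finset.mem_product, Prod.exists] at hw
      obtain ⟨u, v, ⟨⟨hu, hv⟩, huv⟩, rfl⟩ := hw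
      obtain ⟨h1, h2⟩ := hr u v hu hv huv
      exact ⟨⟨(hS u hu).1.trans h1.1.le, h1.2.le.trans (hS v hv).2⟩, h2⟩
    have hcard : S.card ≤ (T \ S).card + 1 := by
      refine Finset.card_le_sdiff_of_interleaved fun u hu v hv huv _ => ?_
      refine ⟨r u v, ?_, (hr u v hu hv huv).1⟩
      exact Finset.mem_image.2 ⟨(u, v), by simp [hu, hv, huv], rfl⟩
    refine ih (fun i => G (i + 1)) (fun i hi => hG (i + 1) (by omega)) (S ∪ (T \ S)) ?_
      (fun s => if s ∈ S then μ s - 1 else 1) ?_ ?_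
    · intro s hs
      rcases Finset.mem_union.1 hs with hs | hs
      · exact hS s hs
      · exact (hT s (Finset.mem_sdiff.1 hs).1).1
    · intro s hs i hi
      by_cases h : s ∈ S
      · simp only [h, if_true] at hi
        exact hz s h (i + 1) (by omega)
      · simp only [h, if_false] at hi
        obtain rfl : i = 0 := by omega
        have hsT : s ∈ T := by simpa [h] using hs
        exact (hT s hsT).2
    · have h1 : ∑ s ∈ S, (if s ∈ S then μ s - 1 else 1) + S.card = ∑ s ∈ S, μ s := by
        rw [Finset.card_eq_sum_ones, ← Finset.sum_add_distrib]
        refine Finset.sum_congr rfl fun s hs => ?_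
        have := hpos s hs
        simp only [hs, if_true]
        omega
      have h2 : ∑ s ∈ T \ S, (if s ∈ S then μ s - 1 else 1) = (T \ S).card := by
        rw [Finset.card_eq_sum_ones]
        refine Finset.sum_congr rfl fun s hs => ?_
        rw [if_neg (Finset.mem_sdiff.1 hs).2]
      rw [Finset.sum_union Finset.disjoint_sdiff, h2]
      omega

/-- Hermite interpolation bound: if `f` is `n` times continuously
differentiable on `[a,b]` and vanishes to order at least `m_l` at distinct points
`x_1, …, x_k ∈ [a,b]` with `m_1 + ⋯ + m_k = n`, then
`sup_{[a,b]} |f| ≤ ((b−a)^n/n!) sup_{[a,b]} |f^{(n)}|`. -/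
theorem hermite_interpolation_bound
    (n : ℕ) (hn : 1 ≤ n) (a b : ℝ) (hab : a ≤ b) (f : ℝ → ℝ)
    (hf : ContDiffOn ℝ (n : ℕ∞) f (Icc a b))
    (k : ℕ) (x : Fin k → ℝ) (hxinj : Function.Injective x)
    (hxmem : ∀ l, x l ∈ Icc a b)
    (m : Fin k → ℕ) (hm : ∀ l, 1 ≤ m l) (hsum : ∑ l, m l = n)
    (hzero : ∀ l, ∀ i < m l, iteratedDerivWithin i f (Icc a b) (x l) = 0) :
    ∀ y ∈ Icc a b,
      |f y| ≤ ((b - a) ^ n / n.factorial) *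
        sSup ((fun z => |iteratedDerivWithin n f (Icc a b) z|) '' Icc a b) := by
  intro y hy
  set A : Set ℝ := (fun z => |iteratedDerivWithin n f (Icc a b) z|) '' Icc a b with hA
  by_cases hyx : ∃ l, x l = y
  · obtain ⟨l, rfl⟩ := hyx
    have h0 : f (x l) = 0 := by simpa using hzero l 0 (hm l)
    rw [h0, abs_zero]
    have h1 : 0 ≤ b - a := sub_nonneg.2 hab
    have h2 : 0 ≤ sSup A := Real.sSup_nonneg (by rintro _ ⟨z, _, rfl⟩; exact abs_nonneg _)
    positivity
  · -- A node exists and differs from `y`, so the interval is nondegenerate.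
    have hlt : a < b := by
      refine lt_of_le_of_ne hab fun h => ?_
      have hk : Nonempty (Fin k) := by
        by_contra hk
        rw [not_nonempty_iff] at hk
        simp at hsum
        omega
      obtain ⟨l⟩ := hk
      subst h
      rw [Icc_self, mem_singleton_iff] at hy
      have := hxmem l
      rw [Icc_self, mem_singleton_iff] at this
      exact hyx ⟨l, this.trans hy.symm⟩
    have hU : UniqueDiffOn ℝ (Icc a b) := uniqueDiffOn_Icc hlt
    set P := hermiteNodal x m with hP
    have hPy : P.eval y ≠ 0 := by
      rw [hP, hermiteNodal, Polynomial.eval_prod]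
      refine Finset.prod_ne_zero_iff.2 fun l _ => ?_
      simp only [Polynomial.eval_pow, Polynomial.eval_sub, Polynomial.eval_X, Polynomial.eval_C]
      exact pow_ne_zero _ (sub_ne_zero.2 fun h => hyx ⟨l, h.symm⟩)
    set c := f y / P.eval y with hc
    obtain ⟨z, hz, hz0⟩ := exists_zero_of_sum_multiplicity (a := a) (b := b) n
      (fun i t => iteratedDerivWithin i f (Icc a b) t
        - c * (Polynomial.derivative^[i] P).eval t)
      (by
        intro i hi t ht
        have h1 : HasDerivWithinAt (iteratedDerivWithin i f (Icc a b))
            (iteratedDerivWithin (i + 1) f (Icc a b) t) (Icc a b) t := by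
          rw [iteratedDerivWithin_succ]
          exact (hf.differentiableOn_iteratedDerivWithin (by exact_mod_cast hi) hU t
            ht).hasDerivWithinAt
        have h2 := ((Polynomial.derivative^[i] P).hasDerivAt t).hasDerivWithinAt (s := Icc a b)
        rw [← Function.iterate_succ_apply' Polynomial.derivative] at h2
        exact h1.sub (h2.const_mul c))
      (insert y (Finset.univ.image x))
      (by
        intro s hs
        simp only [Finset.mem_insert, Finset.mem_image, Finset.mem_univ, true_and] at hs
        rcases hs with rfl | ⟨l, rfl⟩
        exacts [hy, hxmem l])
      (Function.extend x m fun _ => 1)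
      (by
        intro s hs i hi
        simp only [Finset.mem_insert, Finset.mem_image, Finset.mem_univ, true_and] at hs
        rcases hs with rfl | ⟨l, rfl⟩
        · rw [Function.extend_apply' _ _ _ hyx] at hi
          obtain rfl : i = 0 := by omega
          simp [hc, hPy]
        · rw [hxinj.extend_apply] at hi
          simp only [hzero l i hi, hP, hermiteNodal_iterate_derivative_node x m l i hi]
          simp)
      (by
        rw [Finset.sum_insert (by simpa using hyx), Finset.sum_image fun _ _ _ _ h => hxinj h,
          Function.extend_apply' _ _ _ hyx]
        simp only [hxinj.extend_apply, hsum]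
        omega)
    have hnod : (Polynomial.derivative^[n] P).eval z = n.factorial := by
      have := hermiteNodal_iterate_derivative_natDegree x m z
      rwa [hsum] at this
    rw [hnod] at hz0
    have hfac : (0 : ℝ) < n.factorial := by positivity
    have hfy : f y = P.eval y / n.factorial * iteratedDerivWithin n f (Icc a b) z := by
      rw [sub_eq_zero.1 hz0, hc]
      field_simp
    have hPle : |P.eval y| ≤ (b - a) ^ n := hsum ▸ abs_eval_hermiteNodal_le m hxmem hy
    have hbdd : BddAbove A :=
      (isCompact_Icc.image_of_continuousOn
        (hf.continuousOn_iteratedDerivWithin le_rfl hU).abs).bddAbove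
    rw [hfy, abs_mul, abs_div, abs_of_pos hfac]
    have hle : |iteratedDerivWithin n f (Icc a b) z| ≤ sSup A := le_csSup hbdd ⟨z, hz, rfl⟩
    have h1 : 0 ≤ b - a := sub_nonneg.2 hab
    gcongr
end
end

section
/- For every d ≥ 1 there is a constant C > 0 depending only on d with the following property. Let β ∈ (0,1] and τ ≥ 0, and let u, v ∈ L²(𝕋^d) have Fourier coefficients (u_j)_{j∈ℤ^d}, (v_j)_{j∈ℤ^d} with ‖(A^d + I) e^{τ A^{β/2}} v‖_{L²(𝕋^d)} < ∞ and ‖e^{τ A^{β/2}} u‖_{L²(𝕋^d)} < ∞. Then |( e^{τ A^{β/2}} (u v), e^{τ A^{β/2}} u )| ≤ C ‖(A^d + I) e^{τ A^{β/2}} v‖_{L²(𝕋^d)} · ‖e^{τ A^{β/2}} u‖²_{L²(𝕋^d)}; equivalently, in Fourier variables, (2π)^d |Σ_{j,k∈ℤ^d} e^{2τ|j|^β} v_{j−k} u_k \overline{u_j}| ≤ C ( (2π)^d Σ_{j} (|j|^{2d}+1)² e^{2τ|j|^β} |v_j|² )^{1/2} · (2π)^d Σ_{j} e^{2τ|j|^β}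 |u_j|². -/
/-!
By subadditivity of `t ↦ t ^ β` for `0 < β ≤ 1` (`zn_rpow_le`), the Gevrey weight is
submultiplicative, `e^{τ|j|^β} ≤ e^{τ|j-k|^β} e^{τ|k|^β}`. With `A j = e^{τ|j|^β} ‖a j‖` and
`B j = e^{τ|j|^β} ‖b j‖`, the `(j, k)` term of the double sum is thus at most
`B (j - k) * A k * A j`. A Schur-type bound (`norm_tsum_le_of_conv`) gives
`(∑ B) * ∑ A ^ 2`, and Cauchy–Schwarz bounds `∑ B` by the weighted `ℓ²` norm of `b`, since
`(|j|^{2d} + 1)^{-2}` is summable over `ℤ^d` (`summable_inv_weight_sq`).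
The factors of `2π` are harmless because `(2π)^d ≥ 1`.
-/

open Real Set

noncomputable section

/-- Euclidean norm `|j|` of a lattice point `j ∈ ℤ^d`. -/
def zn (d : ℕ) (j : Fin d → ℤ) : ℝ := Real.sqrt (∑ i, ((j i : ℝ)) ^ 2)

/-- A product of summable one-variable functions is summable over the lattice: every finite
partial sum is dominated by a sum over a box, which factors. -/
lemma summable_prod_of_summable (d : ℕ) (f : ℤ → ℝ) (hf0 : ∀ n, 0 ≤ f n) (hf : Summable f) :
    Summable (fun m : Fin d → ℤ => ∏ i, f (m i)) := by
  classical
  refine summable_of_sum_le (c := (∑' n, f n) ^ d)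
    (fun m => Finset.prod_nonneg fun i _ => hf0 _) fun s => ?_
  have hsub : s ⊆ Fintype.piFinset fun i : Fin d => s.image fun m => m i := by
    intro m hm
    rw [Fintype.mem_piFinset]
    exact fun i => Finset.mem_image_of_mem _ hm
  calc ∑ m ∈ s, ∏ i, f (m i)
      ≤ ∑ m ∈ Fintype.piFinset fun i : Fin d => s.image fun m => m i, ∏ i, f (m i) :=
        Finset.sum_le_sum_of_subset_of_nonneg hsub
          fun m _ _ => Finset.prod_nonneg fun i _ => hf0 _
    _ = ∏ i : Fin d, ∑ n ∈ s.image fun m => m i, f n := by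
        rw [Finset.prod_univ_sum]
    _ ≤ ∏ _i : Fin d, ∑' n, f n :=
        Finset.prod_le_prod (fun i _ => Finset.sum_nonneg fun n _ => hf0 n)
          fun i _ => hf.sum_le_tsum _ fun n _ => hf0 n
    _ = (∑' n, f n) ^ d := by simp

lemma summable_inv_one_add_sq : Summable (fun n : ℤ => (1 + (n : ℝ) ^ 2)⁻¹) := by
  have h : Summable (fun n : ℤ => 1 / (n : ℝ) ^ 2) :=
    Real.summable_one_div_int_pow.mpr one_lt_two
  refine Summable.of_norm_bounded_eventually h ?_
  have hfin : ({0} : Set ℤ).Finite := Set.finite_singleton 0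
  filter_upwards [hfin.compl_mem_cofinite] with n hn
  have hn0 : (n : ℝ) ≠ 0 := by exact_mod_cast hn
  have : 0 < (n : ℝ) ^ 2 := by positivity
  rw [Real.norm_of_nonneg (by positivity), ← one_div]
  exact one_div_le_one_div_of_le this (by linarith)

lemma zn_nonneg (d : ℕ) (j : Fin d → ℤ) : 0 ≤ zn d j := Real.sqrt_nonneg _

lemma zn_sq (d : ℕ) (j : Fin d → ℤ) : zn d j ^ 2 = ∑ i, ((j i : ℝ)) ^ 2 :=
  Real.sq_sqrt (Finset.sum_nonneg fun _ _ => sq_nonneg _)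

/-- Convergence rests on `∏ i, (1 + m_i²) ≤ (1 + |m|²)^d ≤ 2^{d-1} (|m|^{2d} + 1)`, which reduces
the lattice sum to a product of one-dimensional ones. -/
lemma summable_inv_weight_sq (d : ℕ) :
    Summable (fun m : Fin d → ℤ => ((zn d m ^ (2 * d) + 1)⁻¹) ^ 2) := by
  have h := (summable_prod_of_summable d _ (fun n => by positivity)
    summable_inv_one_add_sq).mul_left ((2 : ℝ) ^ (d - 1))
  refine Summable.of_nonneg_of_le (fun m => by positivity) (fun m => ?_) h
  have hz := zn_nonneg d m
  set w := zn d m ^ (2 * d) + 1 with hw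
  have hw1 : 1 ≤ w := by
    have : 0 ≤ zn d m ^ (2 * d) := by positivity
    linarith
  have hle : ∏ i, (1 + (m i : ℝ) ^ 2) ≤ 2 ^ (d - 1) * w := by
    calc ∏ i, (1 + (m i : ℝ) ^ 2) ≤ ∏ _i : Fin d, (zn d m ^ 2 + 1) := by
          refine Finset.prod_le_prod (fun i _ => by positivity) fun i _ => ?_
          have := Finset.single_le_sum (f := fun i => (m i : ℝ) ^ 2)
            (fun i _ => sq_nonneg _) (Finset.mem_univ i)
          rw [zn_sq]
          linarith
      _ = (zn d m ^ 2 + 1) ^ d := by simp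
      _ ≤ 2 ^ (d - 1) * ((zn d m ^ 2) ^ d + 1 ^ d) :=
          add_pow_le (by positivity) zero_le_one d
      _ = 2 ^ (d - 1) * w := by rw [hw, one_pow, pow_mul]
  have hP : 0 < ∏ i, (1 + (m i : ℝ) ^ 2) := Finset.prod_pos fun i _ => by positivity
  have hinv : w⁻¹ ≤ 1 := inv_le_one_of_one_le₀ hw1
  have hinv0 : 0 ≤ w⁻¹ := by positivity
  calc (w⁻¹) ^ 2 ≤ w⁻¹ := by nlinarith
    _ ≤ 2 ^ (d - 1) * (∏ i, (1 + (m i : ℝ) ^ 2))⁻¹ := by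
        rw [← div_eq_mul_inv, le_div_iff₀ hP, inv_mul_le_iff₀ (by positivity)]
        linarith
    _ = _ := by rw [Finset.prod_inv_distrib]

lemma zn_triangle (d : ℕ) (j k : Fin d → ℤ) : zn d j ≤ zn d (j - k) + zn d k := by
  have h : ∀ l : Fin d → ℤ,
      zn d l = ‖(WithLp.toLp 2 (fun i => (l i : ℝ)) : EuclideanSpace ℝ (Fin d))‖ := by
    intro l
    simp [zn, EuclideanSpace.norm_eq]
  rw [h, h, h]
  refine le_trans (le_of_eq ?_) (norm_add_le _ _)
  congr 1
  ext i
  simp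

lemma zn_rpow_le (d : ℕ) {β : ℝ} (hβ : β ∈ Ioc (0 : ℝ) 1) (j k : Fin d → ℤ) :
    zn d j ^ β ≤ zn d (j - k) ^ β + zn d k ^ β :=
  (Real.rpow_le_rpow (zn_nonneg d j) (zn_triangle d j k) hβ.1.le).trans
    (Real.rpow_add_le_add_rpow (zn_nonneg d _) (zn_nonneg d _) hβ.1.le hβ.2)

/-- A Schur-type bound on a double sum with a convolution kernel. The inequality
`A k * A j ≤ (A k ^ 2 + A j ^ 2) / 2` splits the majorant into two sums, each of which factors
after a shear of the index set. -/
lemma norm_tsum_le_of_conv {G : Type*} [AddCommGroup G] (F : G × G → ℂ) (A B : G → ℝ)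
    (hB0 : ∀ j, 0 ≤ B j) (hB : Summable B) (hA : Summable fun j => A j ^ 2)
    (hF : ∀ j k, ‖F (j, k)‖ ≤ B (j - k) * A k * A j) :
    ‖∑' p, F p‖ ≤ (∑' j, B j) * ∑' j, A j ^ 2 := by
  have hprod : HasSum (fun p : G × G => B p.1 * A p.2 ^ 2) ((∑' j, B j) * ∑' j, A j ^ 2) :=
    hB.hasSum.mul hA.hasSum
      (hB.mul_of_nonneg hA hB0 fun j => sq_nonneg _)
  let e₁ : G × G ≃ G × G :=
    { toFun := fun p => (p.1 - p.2, p.2)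
      invFun := fun p => (p.1 + p.2, p.2)
      left_inv := fun p => by simp
      right_inv := fun p => by simp }
  let e₂ : G × G ≃ G × G :=
    { toFun := fun p => (p.1 - p.2, p.1)
      invFun := fun p => (p.2, p.2 - p.1)
      left_inv := fun p => by simp
      right_inv := fun p => by simp }
  have h₁ := e₁.hasSum_iff.mpr hprod
  have h₂ := e₂.hasSum_iff.mpr hprod
  have h := (h₁.add h₂).div_const 2
  rw [add_self_div_two] at h
  refine tsum_of_norm_bounded h fun p => (hF p.1 p.2).trans ?_
  have := mul_nonneg (hB0 (p.1 - p.2)) (sq_nonneg (A p.2 - A p.1))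
  simp only [Function.comp_apply, e₁, e₂, Equiv.coe_fn_mk]
  linarith

/-- Weighted Cauchy–Schwarz, with weight `w`. -/
lemma summable_and_tsum_le_of_weight {ι : Type*} (w B : ι → ℝ) (hw : ∀ j, 0 < w j)
    (hB0 : ∀ j, 0 ≤ B j) (hK : Summable fun j => ((w j)⁻¹) ^ 2)
    (hS : Summable fun j => (w j * B j) ^ 2) :
    Summable B ∧
      ∑' j, B j ≤ √(∑' j, ((w j)⁻¹) ^ 2) * √(∑' j, (w j * B j) ^ 2) := by
  have h := Real.summable_and_inner_le_Lp_mul_Lq_tsum_of_nonneg (p := 2) (q := 2)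
    Real.HolderConjugate.two_two (f := fun j => (w j)⁻¹) (g := fun j => w j * B j)
    (fun j => (inv_pos.mpr (hw j)).le) (fun j => mul_nonneg (hw j).le (hB0 j))
    (by simpa only [Real.rpow_two] using hK) (by simpa only [Real.rpow_two] using hS)
  have hcancel : ∀ j, (w j)⁻¹ * (w j * B j) = B j := fun j =>
    inv_mul_cancel_left₀ (hw j).ne' _
  simpa only [hcancel, Real.rpow_two, ← Real.sqrt_eq_rpow] using h

/-- for every `d ≥ 1` there is `C > 0` depending only on `d` such that, in
Fourier variables (with `a`, `b` the Fourier coefficients of `u`, `v`, satisfying the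
reality condition, `‖(A^d+I)e^{τA^{β/2}}v‖_{L²} < ∞` and `‖e^{τA^{β/2}}u‖_{L²} < ∞`),
`|(e^{τA^{β/2}}(uv), e^{τA^{β/2}}u)| = (2π)^d |Σ_{j,k} e^{2τ|j|^β} v_{j−k} u_k conj(u_j)|
  ≤ C ‖(A^d+I)e^{τA^{β/2}}v‖_{L²} ‖e^{τA^{β/2}}u‖²_{L²}`. -/
theorem gevrey_product_estimate
    (d : ℕ) (hd : 1 ≤ d) :
    ∃ C : ℝ, 0 < C ∧
      ∀ (β τ : ℝ), β ∈ Ioc (0 : ℝ) 1 → 0 ≤ τ →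
      ∀ a b : (Fin d → ℤ) → ℂ,
        (∀ j, a (-j) = starRingEnd ℂ (a j)) →
        (∀ j, b (-j) = starRingEnd ℂ (b j)) →
        Summable (fun j : Fin d → ℤ =>
          (zn d j ^ (2 * d) + 1) ^ 2 * Real.exp (2 * τ * zn d j ^ β) * ‖b j‖ ^ 2) →
        Summable (fun j : Fin d → ℤ =>
          Real.exp (2 * τ * zn d j ^ β) * ‖a j‖ ^ 2) →
        (2 * π) ^ d *
            ‖∑' jk : (Fin d → ℤ) × (Fin d → ℤ),
                (Real.exp (2 * τ * zn d jk.1 ^ β) : ℂ) * b (jk.1 - jk.2) * a jk.2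
                  * starRingEnd ℂ (a jk.1)‖
          ≤ C * Real.sqrt ((2 * π) ^ d * ∑' j : Fin d → ℤ,
                (zn d j ^ (2 * d) + 1) ^ 2 * Real.exp (2 * τ * zn d j ^ β) * ‖b j‖ ^ 2)
              * ((2 * π) ^ d * ∑' j : Fin d → ℤ,
                  Real.exp (2 * τ * zn d j ^ β) * ‖a j‖ ^ 2) := by
  set K : ℝ := ∑' m : Fin d → ℤ, ((zn d m ^ (2 * d) + 1)⁻¹) ^ 2
  refine ⟨√K + 1, by positivity, ?_⟩
  intro β τ hβ hτ a b _ _ hb ha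
  set P : ℝ := (2 * π) ^ d with hP
  have hP1 : 1 ≤ P := one_le_pow₀ (by linarith [Real.pi_gt_three])
  let E : (Fin d → ℤ) → ℝ := fun j => Real.exp (τ * zn d j ^ β)
  have hE : ∀ j, Real.exp (2 * τ * zn d j ^ β) = E j ^ 2 := by
    intro j
    rw [← Real.exp_nat_mul]
    congr 1
    push_cast
    ring
  have hE0 : ∀ j, 0 < E j := fun j => Real.exp_pos _
  have hEmul : ∀ j k, E j ≤ E (j - k) * E k := by
    intro j k
    rw [← Real.exp_add, ← mul_add]
    exact Real.exp_le_exp.mpr (mul_le_mul_of_nonneg_left (zn_rpow_le d hβ j k) hτ)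
  have hSb : ∀ j, (zn d j ^ (2 * d) + 1) ^ 2 * Real.exp (2 * τ * zn d j ^ β) * ‖b j‖ ^ 2
      = ((zn d j ^ (2 * d) + 1) * (E j * ‖b j‖)) ^ 2 := by
    intro j
    rw [hE]
    ring
  have hSa : ∀ j, Real.exp (2 * τ * zn d j ^ β) * ‖a j‖ ^ 2 = (E j * ‖a j‖) ^ 2 := by
    intro j
    rw [hE]
    ring
  simp only [hSb] at hb ⊢
  simp only [hSa] at ha ⊢
  obtain ⟨hB, hBle⟩ := summable_and_tsum_le_of_weight (fun j => zn d j ^ (2 * d) + 1)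
    (fun j => E j * ‖b j‖) (fun j => by have := zn_nonneg d j; positivity)
    (fun j => mul_nonneg (hE0 j).le (norm_nonneg _)) (summable_inv_weight_sq d) hb
  have hmain := norm_tsum_le_of_conv
    (fun jk : (Fin d → ℤ) × (Fin d → ℤ) =>
      (Real.exp (2 * τ * zn d jk.1 ^ β) : ℂ) * b (jk.1 - jk.2) * a jk.2
        * starRingEnd ℂ (a jk.1))
    (fun j => E j * ‖a j‖) (fun j => E j * ‖b j‖)
    (fun j => mul_nonneg (hE0 j).le (norm_nonneg _)) hB ha (by
      intro j k
      simp only [norm_mul, RCLike.norm_conj, Complex.norm_real, hE, norm_pow,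
        Real.norm_of_nonneg (hE0 j).le]
      have hc : 0 ≤ E j * (‖b (j - k)‖ * ‖a k‖ * ‖a j‖) :=
        mul_nonneg (hE0 j).le (by positivity)
      have := mul_le_mul_of_nonneg_right (hEmul j k) hc
      linarith)
  set S : ℝ := ∑' j, ((zn d j ^ (2 * d) + 1) * (E j * ‖b j‖)) ^ 2
  set T : ℝ := ∑' j, (E j * ‖a j‖) ^ 2
  have hS0 : 0 ≤ S := tsum_nonneg fun j => sq_nonneg _
  have hT0 : 0 ≤ T := tsum_nonneg fun j => sq_nonneg _
  have hsqrt : √S ≤ √(P * S) := Real.sqrt_le_sqrt (le_mul_of_one_le_left hS0 hP1)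
  have hcoef : ∑' j, E j * ‖b j‖ ≤ (√K + 1) * √(P * S) :=
    hBle.trans (mul_le_mul (by linarith) hsqrt (Real.sqrt_nonneg _) (by positivity))
  calc P * _ ≤ P * ((∑' j, E j * ‖b j‖) * T) :=
        mul_le_mul_of_nonneg_left hmain (by linarith)
    _ ≤ P * ((√K + 1) * √(P * S) * T) :=
        mul_le_mul_of_nonneg_left (mul_le_mul_of_nonneg_right hcoef hT0) (by linarith)
    _ = (√K + 1) * √(P * S) * (P * T) := by ring
end
end
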